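/- arXiv:1512.01294 — 2 statements merged into one kernel-verified Lean document; each statement's English description precedes it below -/
import Mathlib

section
/- Let L ∈ M_N(ℂ), H ∈ M_{r×n}(ℂ) and A ∈ M_n(ℂ). Then the unobservable subspace of the pair (L ⊗ H, I_N ⊗ A), namely { x ∈ ℂ^{Nn} : (L ⊗ H)(I_N ⊗ A)^m x = 0 for all integers m ≥ 0 }, equals the preimage under the linear map L ⊗ I_n of the N-fold Cartesian product O_H × ⋯ × O_H ⊆ ℂ^{Nn}, where O_H = { v ∈ ℂ^n : H A^m v = 0 for all m ≥ 0 } is the unobservable subspace of the pair (H, A). Equivalently, writing x = (x_1,…,x_N) with x_i ∈ ℂ^n, x is unobservable for (L ⊗ H, I_N ⊗ A) if and only if Σ_{j=1}^N l_{ij} x_j ∈ O_H for every i = 1,…,N. -/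
open Matrix
open scoped Kronecker

/-!
Since `(L ⊗ H) (I ⊗ A) ^ m = L ⊗ (H A ^ m)`, the `i`-th block of `(L ⊗ H) (I ⊗ A) ^ m x` is
`H A ^ m` applied to `∑ j, l_{ij} x_j`, which is itself the `i`-th block of `(L ⊗ I) x`.
-/

section

variable {R k l n p : Type*} [CommSemiring R] [Fintype k] [Fintype n]

theorem kronecker_mulVec_apply (L : Matrix l k R) (K : Matrix p n R) (x : k × n → R)
    (i : l) (a : p) :
    ((L ⊗ₖ K) *ᵥ x) (i, a) = (K *ᵥ fun b => ∑ j, L i j * x (j, b)) a := by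
  simp only [mulVec, dotProduct, kroneckerMap_apply, Fintype.sum_prod_type_right, Finset.mul_sum]
  exact Finset.sum_congr rfl fun b _ => Finset.sum_congr rfl fun j _ => by ring

theorem kronecker_mulVec_eq_zero_iff (L : Matrix l k R) (K : Matrix p n R) (x : k × n → R) :
    (L ⊗ₖ K) *ᵥ x = 0 ↔ ∀ i, (K *ᵥ fun b => ∑ j, L i j * x (j, b)) = 0 := by
  simp only [funext_iff, Prod.forall, kronecker_mulVec_apply, Pi.zero_apply]

variable [DecidableEq k] [DecidableEq n]

theorem kronecker_pow (B : Matrix k k R) (A : Matrix n n R) (m : ℕ) :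
    (B ⊗ₖ A) ^ m = (B ^ m) ⊗ₖ (A ^ m) := by
  induction m with
  | zero => simp only [pow_zero, one_kronecker_one]
  | succ m ih => rw [pow_succ, ih, ← mul_kronecker_mul, ← pow_succ, ← pow_succ]

theorem kronecker_mul_one_kronecker_pow (L : Matrix l k R) (H : Matrix p n R) (A : Matrix n n R)
    (m : ℕ) : (L ⊗ₖ H) * ((1 : Matrix k k R) ⊗ₖ A) ^ m = L ⊗ₖ (H * A ^ m) := by
  rw [kronecker_pow, one_pow, ← mul_kronecker_mul, Matrix.mul_one]

/-- The unobservable subspace `⋂ m, ker (H A ^ m)` of the pair `(H, A)`: the initial states of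
the discrete-time system with state matrix `A` for which the output through `H` stays zero. -/
def unobservableSubspace (H : Matrix p n R) (A : Matrix n n R) : Submodule R (n → R) :=
  ⨅ m : ℕ, LinearMap.ker (H * A ^ m).mulVecLin

theorem mem_unobservableSubspace {H : Matrix p n R} {A : Matrix n n R} {v : n → R} :
    v ∈ unobservableSubspace H A ↔ ∀ m : ℕ, H *ᵥ (A ^ m *ᵥ v) = 0 := by
  simp only [unobservableSubspace, Submodule.mem_iInf, LinearMap.mem_ker, mulVecLin_apply,
    mulVec_mulVec]

theorem mem_unobservableSubspace_kronecker (L : Matrix l k R) (H : Matrix p n R)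
    (A : Matrix n n R) (x : k × n → R) :
    x ∈ unobservableSubspace (L ⊗ₖ H) ((1 : Matrix k k R) ⊗ₖ A) ↔
      ∀ i, (fun b => ∑ j, L i j * x (j, b)) ∈ unobservableSubspace H A := by
  simp only [mem_unobservableSubspace, mulVec_mulVec, kronecker_mul_one_kronecker_pow,
    kronecker_mulVec_eq_zero_iff]
  exact forall_comm

theorem stmt3_general (L : Matrix l k R) (H : Matrix p n R) (A : Matrix n n R) :
    (unobservableSubspace (L ⊗ₖ H) ((1 : Matrix k k R) ⊗ₖ A) : Set (k × n → R)) =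
      (fun x => (L ⊗ₖ (1 : Matrix n n R)) *ᵥ x) ⁻¹'
        {y | ∀ i, (fun b => y (i, b)) ∈ unobservableSubspace H A} ∧
    ∀ x : k × n → R,
      x ∈ unobservableSubspace (L ⊗ₖ H) ((1 : Matrix k k R) ⊗ₖ A) ↔
        ∀ i, (fun b => ∑ j, L i j * x (j, b)) ∈ unobservableSubspace H A := by
  refine ⟨?_, mem_unobservableSubspace_kronecker L H A⟩
  ext x
  simp only [SetLike.mem_coe, Set.mem_preimage, Set.mem_ofPred_eq, kronecker_mulVec_apply,
    one_mulVec, mem_unobservableSubspace_kronecker]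

end

/-- the unobservable subspace of the pair `(L ⊗ H, I_N ⊗ A)`
consists exactly of those `x = (x_1, …, x_N)` such that `Σ_j l_{ij} x_j`
belongs to the unobservable subspace `O_H` of `(H, A)` for every `i`;
i.e. it is the preimage under `L ⊗ I_n` of `O_H × ⋯ × O_H`. -/
theorem stmt3 {N r n : ℕ} (L : Matrix (Fin N) (Fin N) ℂ)
    (H : Matrix (Fin r) (Fin n) ℂ) (A : Matrix (Fin n) (Fin n) ℂ) :
    {x : Fin N × Fin n → ℂ | ∀ m : ℕ,
        (L ⊗ₖ H) *ᵥ (((1 : Matrix (Fin N) (Fin N) ℂ) ⊗ₖ A) ^ m *ᵥ x) = 0} =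
      (fun x : Fin N × Fin n → ℂ =>
          (L ⊗ₖ (1 : Matrix (Fin n) (Fin n) ℂ)) *ᵥ x) ⁻¹'
        {y : Fin N × Fin n → ℂ | ∀ i : Fin N,
          (fun b => y (i, b)) ∈ {v : Fin n → ℂ | ∀ m : ℕ, H *ᵥ (A ^ m *ᵥ v) = 0}} ∧
    ∀ x : Fin N × Fin n → ℂ,
      (∀ m : ℕ,
        (L ⊗ₖ H) *ᵥ (((1 : Matrix (Fin N) (Fin N) ℂ) ⊗ₖ A) ^ m *ᵥ x) = 0) ↔
      (∀ i : Fin N, ∀ m : ℕ,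
        H *ᵥ (A ^ m *ᵥ fun b => ∑ j, L i j * x (j, b)) = 0) := by
  simpa only [Set.ext_iff, SetLike.mem_coe, Set.mem_preimage, Set.mem_ofPred_eq,
    mem_unobservableSubspace] using stmt3_general L H A
end

section
/- Assume the network data and LMI variables of the context, and suppose that for every i ∈ {1,…,N} and every k ∈ I both LMI (15) (γ²I − τ_i^k α_i² E_i^k ≻ 0 and γ²I − θ_ij^k β_ij² F_ij ≻ 0 for all j ∈ V_i^k) and the block LMI (16) hold. Define the gains K_ij^k = γ²(X_i^k)^{-1} H_ij' F_ij^{-1} and L_i^k = [ γ²(X_i^k)^{-1}(C_i^k)' + B₂(D_i^k)' ] (E_i^k)^{-1}, and set ε = min_{i,k} 2δ_i/(q_i^k + 1). Then for every k ∈ I, all vectors e_1,…,e_N ∈ ℝ^n, ξ ∈ ℝ^l, ξ_i ∈ ℝ^{l_i}, w_ij ∈ ℝ^{s_ij} (j ∈ V_i^k), and all vectors ω_i, ω_ij^{(1)}, ω_ij^{(2)} ∈ ℝ^n satisfying the norm bounds ‖ω_i‖² ≤ α_i² ‖C_i^k e_i + D_i^k ξ + D̄_i^k ξ_i‖², ‖ω_ij^{(1)}‖²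 ≤ β_ij² ‖H_ij e_i + G_ij w_ij‖², ‖ω_ij^{(2)}‖² ≤ β_ij² ‖H_ij e_j‖², the following dissipation inequality holds: N·Ψ^k(e) + Σ_{i=1}^N [ Σ_{l=1}^M λ_kl e_i' X_i^l e_i + 2 e_i' X_i^k f_i ] ≤ −ε Σ_{i=1}^N e_i' X_i^k e_i + γ² Σ_{i=1}^N ( ‖ξ‖² + ‖ξ_i‖² + Σ_{j∈V_i^k} ‖w_ij‖² ), where f_i = (A − L_i^k C_i^k) e_i + Σ_{j∈V_i^k} K_ij^k ( H_ij (e_j − e_i) − G_ij w_ij ) + (B₂ − L_i^k D_i^k) ξ − L_i^k D̄_i^k ξ_i − Σ_{j∈V_i^k} (ω_ij^{(1)} + ω_ij^{(2)}) − ω_i, and Ψ^k(e) = (1/N) Σ_{i=1}^N Σ_{j∈V_i^k} ‖e_j − e_i‖². -/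
open Matrix Finset

noncomputable section

/-- The data of the switching sensor network: plant matrices `A`, `B2`,
per-node and per-edge dimensions, neighbourhoods `V i k`, measurement
matrices `C`, `D`, `Dbar`, interconnection matrices `H`, `G`, and the
transition rate matrix `Lam` of the Markov chain on `Fin M`. -/
structure NetData (n N M l : ℕ) where
  A : Matrix (Fin n) (Fin n) ℝ
  B2 : Matrix (Fin n) (Fin l) ℝ
  r : Fin N → ℕ
  li : Fin N → ℕ
  rr : Fin N → Fin N → ℕ
  ss : Fin N → Fin N → ℕ
  V : Fin N → Fin M → Finset (Fin N)
  C : (i : Fin N) → Fin M → Matrix (Fin (r i)) (Fin n) ℝ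
  D : (i : Fin N) → Fin M → Matrix (Fin (r i)) (Fin l) ℝ
  Dbar : (i : Fin N) → Fin M → Matrix (Fin (r i)) (Fin (li i)) ℝ
  H : (i j : Fin N) → Matrix (Fin (rr i j)) (Fin n) ℝ
  G : (i j : Fin N) → Matrix (Fin (rr i j)) (Fin (ss i j)) ℝ
  Lam : Matrix (Fin M) (Fin M) ℝ

namespace NetData

variable {n N M l : ℕ} (nd : NetData n N M l)

/-- `E_i^k = D_i^k (D_i^k)' + D̄_i^k (D̄_i^k)'`. -/
def E (i : Fin N) (k : Fin M) : Matrix (Fin (nd.r i)) (Fin (nd.r i)) ℝ :=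
  nd.D i k * (nd.D i k)ᵀ + nd.Dbar i k * (nd.Dbar i k)ᵀ

/-- `F_ij = G_ij G_ij'`. -/
def F (i j : Fin N) : Matrix (Fin (nd.rr i j)) (Fin (nd.rr i j)) ℝ :=
  nd.G i j * (nd.G i j)ᵀ

/-- In-degree `p_i^k = |V_i^k|`. -/
def pdeg (i : Fin N) (k : Fin M) : ℕ := (nd.V i k).card

/-- Out-degree `q_i^k = |{j : i ∈ V_j^k}|`. -/
def qdeg (i : Fin N) (k : Fin M) : ℕ :=
  (Finset.univ.filter fun j => i ∈ nd.V j k).card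

variable (γ : ℝ) (δ : Fin N → ℝ) (β : Fin N → Fin N → ℝ)
  (τ : Fin N → Fin M → ℝ) (θ ϑ : Fin N → Fin N → Fin M → ℝ)
  (X : Fin N → Fin M → Matrix (Fin n) (Fin n) ℝ)

/-- The block `Q_i^k` of the LMI (16). -/
def Qblk (i : Fin N) (k : Fin M) : Matrix (Fin n) (Fin n) ℝ :=
  X i k * (nd.A + δ i • 1 - nd.B2 * (nd.D i k)ᵀ * (nd.E i k)⁻¹ * nd.C i k)
  + (nd.A + δ i • 1 - nd.B2 * (nd.D i k)ᵀ * (nd.E i k)⁻¹ * nd.C i k)ᵀ * X i k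
  + (((nd.pdeg i k : ℝ) + (nd.qdeg i k : ℝ))) • 1
  + ∑ j ∈ Finset.univ.filter (fun j => i ∈ nd.V j k),
      (ϑ j i k * (β j i) ^ 2) • ((nd.H j i)ᵀ * nd.H j i)
  + ∑ l', nd.Lam k l' • X i l'
  - γ ^ 2 • ((nd.C i k)ᵀ * (nd.E i k)⁻¹ * nd.C i k)
  - γ ^ 2 • ∑ j ∈ nd.V i k, (nd.H i j)ᵀ * (nd.F i j)⁻¹ * nd.H i j

/-- The block `N_i^k` of the LMI (16). -/
def Nblk (i : Fin N) (k : Fin M) : Matrix (Fin l) (Fin n) ℝ :=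
  (1 - (nd.D i k)ᵀ * (nd.E i k)⁻¹ * nd.D i k) * nd.B2ᵀ * X i k

/-- The block `S_i^k` of the LMI (16). -/
def Sblk (i : Fin N) (k : Fin M) : Matrix (Fin (nd.li i)) (Fin n) ℝ :=
  -((nd.Dbar i k)ᵀ * (nd.E i k)⁻¹ * nd.D i k * nd.B2ᵀ * X i k)

/-- Index type for the rows/columns of the fourth block row of the LMI (16):
one copy of `Fin n` for the `τ`-block and one copy for each `θ`- and
`ϑ`-block (`j ∈ V_i^k`). -/
abbrev tIdx (i : Fin N) (k : Fin M) : Type :=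
  Unit ⊕ ({j // j ∈ nd.V i k} ⊕ {j // j ∈ nd.V i k})

/-- The diagonal scalars of the block `T_i^k`. -/
def tCoef (i : Fin N) (k : Fin M) : nd.tIdx i k → ℝ
  | .inl _ => τ i k
  | .inr (.inl j) => θ i j.1 k
  | .inr (.inr j) => ϑ i j.1 k

/-- Entry of the block `Ξ_i^k` (horizontal concatenation of the blocks
`γ² H_ij' F_ij⁻¹ H_ij − I`, `j ∈ V_i^k`). -/
def xiBlk (i : Fin N) (k : Fin M)
    (x : Fin n) (jc : {j // j ∈ nd.V i k} × Fin n) : ℝ :=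
  (γ ^ 2 • ((nd.H i jc.1.1)ᵀ * (nd.F i jc.1.1)⁻¹ * nd.H i jc.1.1)
    - (1 : Matrix (Fin n) (Fin n) ℝ)) x jc.2

/-- Index type for the rows/columns of the block matrix in the LMI (16). -/
abbrev idx (i : Fin N) (k : Fin M) : Type :=
  Fin n ⊕ (Fin l ⊕ (Fin (nd.li i) ⊕
    ((nd.tIdx i k × Fin n) ⊕ ({j // j ∈ nd.V i k} × Fin n))))

/-- The symmetric block matrix of the LMI (16), with block rows
`[Q, ⋆, ⋆, ⋆, ⋆]`, `[N, −γ²I, ⋆, ⋆, ⋆]`, `[S, 0, −γ²I, ⋆, ⋆]`,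
`[1 ⊗ X, 0, 0, −T, ⋆]`, `[Ξ', 0, 0, 0, −Z]`. -/
def bigMat (i : Fin N) (k : Fin M) :
    Matrix (nd.idx i k) (nd.idx i k) ℝ :=
  Matrix.of fun a b =>
    match a, b with
    -- block row 1
    | .inl x, .inl y => nd.Qblk γ δ β ϑ X i k x y
    | .inl x, .inr (.inl y) => (nd.Nblk X i k)ᵀ x y
    | .inl x, .inr (.inr (.inl y)) => (nd.Sblk X i k)ᵀ x y
    | .inl x, .inr (.inr (.inr (.inl wc))) => X i k wc.2 x
    | .inl x, .inr (.inr (.inr (.inr jc))) => nd.xiBlk γ i k x jc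
    -- block row 2
    | .inr (.inl x), .inl y => nd.Nblk X i k x y
    | .inr (.inl x), .inr (.inl y) => if x = y then -(γ ^ 2) else 0
    | .inr (.inl _), .inr (.inr _) => 0
    -- block row 3
    | .inr (.inr (.inl x)), .inl y => nd.Sblk X i k x y
    | .inr (.inr (.inl _)), .inr (.inl _) => 0
    | .inr (.inr (.inl x)), .inr (.inr (.inl y)) => if x = y then -(γ ^ 2) else 0
    | .inr (.inr (.inl _)), .inr (.inr (.inr _)) => 0
    -- block row 4 : [1_{1+2p} ⊗ X, 0, 0, −T, 0]
    | .inr (.inr (.inr (.inl wc))), .inl y => X i k wc.2 y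
    | .inr (.inr (.inr (.inl _))), .inr (.inl _) => 0
    | .inr (.inr (.inr (.inl _))), .inr (.inr (.inl _)) => 0
    | .inr (.inr (.inr (.inl wc))), .inr (.inr (.inr (.inl wc'))) =>
        if wc = wc' then -(nd.tCoef τ θ ϑ i k wc.1) else 0
    | .inr (.inr (.inr (.inl _))), .inr (.inr (.inr (.inr _))) => 0
    -- block row 5 : [Ξ', 0, 0, 0, −Z]
    | .inr (.inr (.inr (.inr jc))), .inl y => nd.xiBlk γ i k y jc
    | .inr (.inr (.inr (.inr _))), .inr (.inl _) => 0
    | .inr (.inr (.inr (.inr _))), .inr (.inr (.inl _)) => 0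
    | .inr (.inr (.inr (.inr _))), .inr (.inr (.inr (.inl _))) => 0
    | .inr (.inr (.inr (.inr jc))), .inr (.inr (.inr (.inr jc'))) =>
        if jc.1 = jc'.1 then
          -((2 * δ jc.1.1 / ((nd.qdeg jc.1.1 k : ℝ) + 1)) * X jc.1.1 k jc.2 jc'.2)
        else 0

/-- The interconnection gain `K_ij^k = γ² (X_i^k)⁻¹ H_ij' F_ij⁻¹`. -/
def Kgain (i j : Fin N) (k : Fin M) : Matrix (Fin n) (Fin (nd.rr i j)) ℝ :=
  γ ^ 2 • ((X i k)⁻¹ * (nd.H i j)ᵀ * (nd.F i j)⁻¹)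

/-- The innovation gain `L_i^k = [γ² (X_i^k)⁻¹ (C_i^k)' + B₂ (D_i^k)'] (E_i^k)⁻¹`. -/
def Lgain (i : Fin N) (k : Fin M) : Matrix (Fin n) (Fin (nd.r i)) ℝ :=
  (γ ^ 2 • ((X i k)⁻¹ * (nd.C i k)ᵀ) + nd.B2 * (nd.D i k)ᵀ) * (nd.E i k)⁻¹

/-- The error drift `f_i` of the perturbed auxiliary observer network. -/
def drift (k : Fin M) (e : Fin N → Fin n → ℝ) (ξ : Fin l → ℝ)
    (ξl : (i : Fin N) → Fin (nd.li i) → ℝ)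
    (w : (i j : Fin N) → Fin (nd.ss i j) → ℝ)
    (ω : Fin N → Fin n → ℝ) (ω1 ω2 : Fin N → Fin N → Fin n → ℝ)
    (i : Fin N) : Fin n → ℝ :=
  (nd.A - nd.Lgain γ X i k * nd.C i k) *ᵥ e i
  + ∑ j ∈ nd.V i k,
      nd.Kgain γ X i j k *ᵥ (nd.H i j *ᵥ (e j - e i) - nd.G i j *ᵥ w i j)
  + (nd.B2 - nd.Lgain γ X i k * nd.D i k) *ᵥ ξ
  - (nd.Lgain γ X i k * nd.Dbar i k) *ᵥ ξl i
  - (∑ j ∈ nd.V i k, (ω1 i j + ω2 i j) + ω i)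

/-- The disagreement function `Ψ^k(e) = (1/N) Σ_i Σ_{j ∈ V_i^k} ‖e_j − e_i‖²`. -/
def disagree (k : Fin M) (e : Fin N → Fin n → ℝ) : ℝ :=
  (1 / (N : ℝ)) * ∑ i, ∑ j ∈ nd.V i k, (e j - e i) ⬝ᵥ (e j - e i)

end NetData

/-!
The LMI (16) is evaluated, for each node `i`, at the error `e_i`, the noise component invisible to
the measurement of `i` (the image of `(ξ, ξ_i)` under the projection onto the kernel of
`[D_i^k, D̄_i^k]`), the uncertainties `-ω` and the errors `e_j` of the neighbours. The gains turn
the drift into a quadratic form in the innovations `C e + D ξ + D̄ ξ_i` and `H e + G w`, weighted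
by `γ² E⁻¹` and `γ² F⁻¹`; by LMI (15) the energy of an innovation dominates the uncertainty it
bounds, and what remains of the noise energy is at most `γ²‖·‖²`. Each edge carries into the
balance of node `i` an energy of `e_j` that the degree terms of `Q_j^k`, its `ϑ`-terms and `δ_j`
provide at node `j`, so these energies cancel when the balances are summed over the network.
-/

section PosSemidef

variable {m 𝕜 : Type*} [Fintype m] [DecidableEq m] [RCLike 𝕜]

open scoped ComplexOrder MatrixOrder in
theorem posSemidef_smul_inv_sub_smul_one {E : Matrix m m 𝕜} (hE : E.PosDef) {g c : 𝕜}
    (h : (g • (1 : Matrix m m 𝕜) - c • E).PosSemidef) :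
    (g • E⁻¹ - c • (1 : Matrix m m 𝕜)).PosSemidef := by
  have hunit : IsUnit E.det := (isUnit_iff_isUnit_det E).1 hE.isUnit
  have hleft : E⁻¹ * (g • 1 - c • E) = g • E⁻¹ - c • 1 := by
    rw [mul_sub, mul_smul_comm, mul_smul_comm, mul_one, nonsing_inv_mul E hunit]
  have hright : (g • 1 - c • E) * E⁻¹ = g • E⁻¹ - c • 1 := by
    rw [sub_mul, smul_mul_assoc, smul_mul_assoc, one_mul, mul_nonsing_inv E hunit]
  rw [← hleft]
  exact (Commute.mul_nonneg hE.inv.posSemidef.nonneg h.nonneg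
    (hleft.trans hright.symm)).posSemidef

end PosSemidef

section BilinearForms

variable {R ι m n : Type*} [CommRing R] [Fintype ι] [Fintype m] [Fintype n]

theorem dotProduct_mulVec_comm_of_isSymm {A : Matrix m m R} (hA : A.IsSymm) (x y : m → R) :
    x ⬝ᵥ A *ᵥ y = y ⬝ᵥ A *ᵥ x := by
  rw [← dotProduct_transpose_mulVec, hA.eq]

theorem mulVec_dotProduct_eq_dotProduct_transpose_mulVec (A : Matrix m n R) (x : n → R)
    (y : m → R) : (A *ᵥ x) ⬝ᵥ y = x ⬝ᵥ Aᵀ *ᵥ y := by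
  rw [dotProduct_transpose_mulVec, dotProduct_comm]

theorem dotProduct_mulVec_eq_transpose_mulVec_dotProduct (A : Matrix m n R) (x : m → R)
    (y : n → R) : x ⬝ᵥ A *ᵥ y = (Aᵀ *ᵥ x) ⬝ᵥ y := by
  rw [dotProduct_mulVec, mulVec_transpose]

theorem mulVec_dotProduct_inv_mulVec [DecidableEq m] {A : Matrix m m R} (hA : A.IsSymm)
    (hunit : IsUnit A) (x y : m → R) : (A *ᵥ x) ⬝ᵥ A⁻¹ *ᵥ y = x ⬝ᵥ y := by
  rw [mulVec_dotProduct_eq_dotProduct_transpose_mulVec, hA.eq, mulVec_mulVec,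
    mul_nonsing_inv A ((isUnit_iff_isUnit_det A).1 hunit), one_mulVec]

theorem sumElim_dotProduct_fromBlocks_transpose_mulVec (A : Matrix m m R) (B : Matrix n m R)
    (D : Matrix n n R) (x : m → R) (y : n → R) :
    Sum.elim x y ⬝ᵥ fromBlocks A Bᵀ B D *ᵥ Sum.elim x y =
      x ⬝ᵥ A *ᵥ x + 2 * ((B *ᵥ x) ⬝ᵥ y) + y ⬝ᵥ D *ᵥ y := by
  rw [fromBlocks_mulVec, Sum.elim_comp_inl, Sum.elim_comp_inr, sumElim_dotProduct_sumElim,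
    dotProduct_add, dotProduct_add, dotProduct_transpose_mulVec, dotProduct_comm (B *ᵥ x) y]
  ring

theorem dotProduct_eq_sum_dotProduct (x y : ι × m → R) :
    x ⬝ᵥ y = ∑ t, (fun a => x (t, a)) ⬝ᵥ fun a => y (t, a) :=
  Fintype.sum_prod_type _

theorem dotProduct_blockDiagonal_swap_mulVec [DecidableEq ι] (B : ι → Matrix m m R)
    (x : ι × m → R) :
    x ⬝ᵥ (blockDiagonal B).submatrix Prod.swap Prod.swap *ᵥ x =
      ∑ t, (fun a => x (t, a)) ⬝ᵥ B t *ᵥ fun a => x (t, a) := by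
  rw [dotProduct_eq_sum_dotProduct]
  congr! with t _
  simp [mulVec, dotProduct, Fintype.sum_prod_type_right, blockDiagonal_apply]

end BilinearForms

section RowKernelProj

variable {R m s : Type*} [CommRing R] [Fintype m] [DecidableEq m] [Fintype s] [DecidableEq s]

/-- The orthogonal projection `I - G'(GG')⁻¹G` onto the kernel of a matrix `G` whose Gram matrix
`GG'` is invertible: the part of a noise vector that `G` does not transmit. -/
def rowKernelProj (G : Matrix m s R) : Matrix s s R :=
  1 - Gᵀ * (G * Gᵀ)⁻¹ * G

theorem isSymm_rowKernelProj (G : Matrix m s R) : (rowKernelProj G).IsSymm := by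
  simp [IsSymm, rowKernelProj, transpose_nonsing_inv, Matrix.mul_assoc]

theorem dotProduct_rowKernelProj_mulVec (G : Matrix m s R) (a b : s → R) :
    a ⬝ᵥ rowKernelProj G *ᵥ b = a ⬝ᵥ b - (G *ᵥ a) ⬝ᵥ (G * Gᵀ)⁻¹ *ᵥ (G *ᵥ b) := by
  rw [rowKernelProj, sub_mulVec, one_mulVec, dotProduct_sub, ← mulVec_mulVec, ← mulVec_mulVec,
    mulVec_dotProduct_eq_dotProduct_transpose_mulVec]

theorem rowKernelProj_mul_self {G : Matrix m s R} (hG : IsUnit (G * Gᵀ)) :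
    rowKernelProj G * rowKernelProj G = rowKernelProj G := by
  have hinv : (G * Gᵀ)⁻¹ * (G * Gᵀ) = 1 := nonsing_inv_mul _ ((isUnit_iff_isUnit_det _).1 hG)
  have hkill : Gᵀ * (G * Gᵀ)⁻¹ * G * rowKernelProj G = 0 := by
    rw [rowKernelProj, mul_sub, mul_one, sub_eq_zero]
    calc Gᵀ * (G * Gᵀ)⁻¹ * G
        = Gᵀ * ((G * Gᵀ)⁻¹ * (G * Gᵀ)) * (G * Gᵀ)⁻¹ * G := by rw [hinv, Matrix.mul_one]
      _ = Gᵀ * (G * Gᵀ)⁻¹ * G * (Gᵀ * (G * Gᵀ)⁻¹ * G) := by simp only [Matrix.mul_assoc]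
  nth_rw 1 [rowKernelProj]
  rw [sub_mul, one_mul, hkill, sub_zero]

theorem rowKernelProj_mulVec_dotProduct_mulVec {G : Matrix m s R} (hG : IsUnit (G * Gᵀ))
    (a b : s → R) :
    (rowKernelProj G *ᵥ a) ⬝ᵥ rowKernelProj G *ᵥ b = a ⬝ᵥ rowKernelProj G *ᵥ b := by
  rw [mulVec_dotProduct_eq_dotProduct_transpose_mulVec, (isSymm_rowKernelProj G).eq,
    mulVec_mulVec, rowKernelProj_mul_self hG]

end RowKernelProj

section OutputUncertainty

variable {m n s : Type*} [Fintype m] [DecidableEq m] [Fintype n] [Fintype s] [DecidableEq s]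

theorem smul_dotProduct_self_le_of_posSemidef {E : Matrix m m ℝ} (hE : E.PosDef) {g c : ℝ}
    (h : (g • (1 : Matrix m m ℝ) - c • E).PosSemidef) (y : m → ℝ) :
    c * (y ⬝ᵥ y) ≤ g * (y ⬝ᵥ E⁻¹ *ᵥ y) := by
  have hnonneg := (posSemidef_smul_inv_sub_smul_one hE h).dotProduct_mulVec_nonneg y
  simpa only [star_trivial, sub_mulVec, smul_mulVec, one_mulVec, dotProduct_sub, dotProduct_smul,
    smul_eq_mul, sub_nonneg] using hnonneg

-- With `u = y + Gζ`, twice `y'F⁻¹u` is `y'F⁻¹y + u'F⁻¹u - (Gζ)'F⁻¹(Gζ)`; the middle term pays for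
-- `v`, and the last one is the energy of the part of `ζ` removed by `rowKernelProj G`.
theorem output_uncertainty_le {G : Matrix m s ℝ} (hF : (G * Gᵀ).PosDef) {g τ a : ℝ} (hτ : 0 ≤ τ)
    (h : (g • (1 : Matrix m m ℝ) - (τ * a) • (G * Gᵀ)).PosSemidef)
    {v : n → ℝ} {y : m → ℝ} {ζ : s → ℝ}
    (hv : v ⬝ᵥ v ≤ a * ((y + G *ᵥ ζ) ⬝ᵥ (y + G *ᵥ ζ))) :
    τ * (v ⬝ᵥ v) + g * (y ⬝ᵥ (G * Gᵀ)⁻¹ *ᵥ y) + g * (ζ ⬝ᵥ rowKernelProj G *ᵥ ζ) ≤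
      2 * (g * (y ⬝ᵥ (G * Gᵀ)⁻¹ *ᵥ (y + G *ᵥ ζ))) + g * (ζ ⬝ᵥ ζ) := by
  have hbound : τ * (v ⬝ᵥ v) ≤ g * ((y + G *ᵥ ζ) ⬝ᵥ (G * Gᵀ)⁻¹ *ᵥ (y + G *ᵥ ζ)) :=
    calc τ * (v ⬝ᵥ v) ≤ τ * (a * ((y + G *ᵥ ζ) ⬝ᵥ (y + G *ᵥ ζ))) := by gcongr
      _ = τ * a * ((y + G *ᵥ ζ) ⬝ᵥ (y + G *ᵥ ζ)) := by ring
      _ ≤ _ := smul_dotProduct_self_le_of_posSemidef hF h _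
  have hsymm : (G *ᵥ ζ) ⬝ᵥ (G * Gᵀ)⁻¹ *ᵥ y = y ⬝ᵥ (G * Gᵀ)⁻¹ *ᵥ (G *ᵥ ζ) :=
    dotProduct_mulVec_comm_of_isSymm (isHermitian_iff_isSymm.1 hF.inv.isHermitian) _ _
  rw [dotProduct_rowKernelProj_mulVec]
  simp only [mulVec_add, dotProduct_add, add_dotProduct, hsymm] at hbound ⊢
  linarith

end OutputUncertainty

namespace NetData

variable {n N M l : ℕ} (nd : NetData n N M l) (γ : ℝ) (δ : Fin N → ℝ) (β : Fin N → Fin N → ℝ)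
  (τ : Fin N → Fin M → ℝ) (θ ϑ : Fin N → Fin N → Fin M → ℝ)
  (X : Fin N → Fin M → Matrix (Fin n) (Fin n) ℝ) (i j : Fin N) (k : Fin M)

section StackedNoise

/-- The input matrix of node `i` for the stacked noise `(ξ, ξ_i)`: the plant is driven by `ξ`
only. -/
def inputNoise : Matrix (Fin n) (Fin l ⊕ Fin (nd.li i)) ℝ :=
  fromCols nd.B2 0

/-- The matrix `[D_i^k, D̄_i^k]` through which the stacked noise `(ξ, ξ_i)` enters the measurement
of node `i`. -/
def measNoise : Matrix (Fin (nd.r i)) (Fin l ⊕ Fin (nd.li i)) ℝ :=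
  fromCols (nd.D i k) (nd.Dbar i k)

theorem E_eq_measNoise_mul_transpose : nd.E i k = nd.measNoise i k * (nd.measNoise i k)ᵀ := by
  rw [E, measNoise, transpose_fromCols, fromCols_mul_fromRows]

theorem inputNoise_transpose_mulVec (x : Fin n → ℝ) :
    (nd.inputNoise i)ᵀ *ᵥ x = Sum.elim (nd.B2ᵀ *ᵥ x) 0 := by
  rw [inputNoise, transpose_fromCols, fromRows_mulVec, transpose_zero, zero_mulVec]

theorem inputNoise_mulVec (ξ : Fin l → ℝ) (ξ' : Fin (nd.li i) → ℝ) :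
    nd.inputNoise i *ᵥ Sum.elim ξ ξ' = nd.B2 *ᵥ ξ := by
  rw [inputNoise, fromCols_mulVec_sumElim, zero_mulVec, add_zero]

theorem measNoise_mulVec (ξ : Fin l → ℝ) (ξ' : Fin (nd.li i) → ℝ) :
    nd.measNoise i k *ᵥ Sum.elim ξ ξ' = nd.D i k *ᵥ ξ + nd.Dbar i k *ᵥ ξ' := by
  rw [measNoise, fromCols_mulVec_sumElim]

theorem measNoise_mulVec_inputNoise_transpose_mulVec (x : Fin n → ℝ) :
    nd.measNoise i k *ᵥ ((nd.inputNoise i)ᵀ *ᵥ x) = nd.D i k *ᵥ (nd.B2ᵀ *ᵥ x) := by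
  rw [inputNoise_transpose_mulVec, measNoise_mulVec, mulVec_zero, add_zero]

theorem sumElim_Nblk_mulVec_Sblk_mulVec (e : Fin n → ℝ) :
    Sum.elim (nd.Nblk X i k *ᵥ e) (nd.Sblk X i k *ᵥ e) =
      rowKernelProj (nd.measNoise i k) *ᵥ ((nd.inputNoise i)ᵀ *ᵥ (X i k *ᵥ e)) := by
  rw [rowKernelProj, ← E_eq_measNoise_mul_transpose, sub_mulVec, one_mulVec, ← mulVec_mulVec,
    ← mulVec_mulVec, measNoise_mulVec_inputNoise_transpose_mulVec, inputNoise_transpose_mulVec,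
    measNoise, transpose_fromCols, fromRows_mulVec]
  ext (a | a) <;>
    simp only [Nblk, Sblk, sub_mulVec, neg_mulVec, one_mulVec, ← mulVec_mulVec, Pi.sub_apply,
      Pi.neg_apply, Pi.zero_apply, zero_sub, Sum.elim_inl, Sum.elim_inr]

end StackedNoise

section LMI

/-- The weight `2δ_j / (q_j^k + 1)` of `X_j^k` in the block `Z_i^k`. -/
def decayRate : ℝ :=
  2 * δ j / ((nd.qdeg j k : ℝ) + 1)

theorem qdeg_add_one_mul_decayRate :
    ((nd.qdeg i k : ℝ) + 1) * nd.decayRate δ i k = 2 * δ i :=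
  mul_div_cancel₀ _ (by positivity)

/-- Index type for the block rows of LMI (16) below the first, so that `idx` is
`Fin n ⊕ lowerIdx`. -/
abbrev lowerIdx : Type :=
  Fin l ⊕ (Fin (nd.li i) ⊕ ((nd.tIdx i k × Fin n) ⊕ ({j // j ∈ nd.V i k} × Fin n)))

/-- The block column `[N; S; 1 ⊗ X; Ξ']` of LMI (16) below `Q_i^k`. -/
def lmiCoupling : Matrix (nd.lowerIdx i k) (Fin n) ℝ :=
  fromRows (nd.Nblk X i k) (fromRows (nd.Sblk X i k)
    (fromRows (of fun wc x => X i k wc.2 x) (of fun jc x => nd.xiBlk γ i k x jc)))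

/-- The block diagonal matrix `diag[γ²I, γ²I, T, Z]` of LMI (16). -/
def lmiDamping : Matrix (nd.lowerIdx i k) (nd.lowerIdx i k) ℝ :=
  fromBlocks (γ ^ 2 • 1) 0 0 (fromBlocks (γ ^ 2 • 1) 0 0 (fromBlocks
    (diagonal fun wc => nd.tCoef τ θ ϑ i k wc.1) 0 0
    ((blockDiagonal fun j : {j // j ∈ nd.V i k} => nd.decayRate δ j k • X j k).submatrix
      Prod.swap Prod.swap)))

theorem bigMat_eq_fromBlocks :
    nd.bigMat γ δ β τ θ ϑ X i k =
      fromBlocks (nd.Qblk γ δ β ϑ X i k) (nd.lmiCoupling γ X i k)ᵀ (nd.lmiCoupling γ X i k)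
        (-nd.lmiDamping γ δ τ θ ϑ X i k) := by
  ext (a | a | a | a | a) (b | b | b | b | b) <;>
    simp [bigMat, lmiCoupling, lmiDamping, decayRate, one_apply, diagonal_apply,
      blockDiagonal_apply, apply_ite (fun x : ℝ => -x)]

theorem lmiCoupling_mulVec_dotProduct (e : Fin n → ℝ) (u : Fin l → ℝ) (u' : Fin (nd.li i) → ℝ)
    (o : nd.tIdx i k → Fin n → ℝ) (z : {j // j ∈ nd.V i k} → Fin n → ℝ) :
    (nd.lmiCoupling γ X i k *ᵥ e) ⬝ᵥ
        Sum.elim u (Sum.elim u' (Sum.elim (fun wc => o wc.1 wc.2) fun jc => z jc.1 jc.2)) =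
      Sum.elim (nd.Nblk X i k *ᵥ e) (nd.Sblk X i k *ᵥ e) ⬝ᵥ Sum.elim u u' +
        ∑ t, (X i k *ᵥ e) ⬝ᵥ o t +
        ∑ j : {j // j ∈ nd.V i k},
          (γ ^ 2 * ((nd.H i j *ᵥ e) ⬝ᵥ (nd.F i j)⁻¹ *ᵥ (nd.H i j *ᵥ z j)) - e ⬝ᵥ z j) := by
  have hXi (j : {j // j ∈ nd.V i k}) :
      ((γ ^ 2 • ((nd.H i j)ᵀ * (nd.F i j)⁻¹ * nd.H i j) - 1)ᵀ *ᵥ e) ⬝ᵥ z j =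
        γ ^ 2 * ((nd.H i j *ᵥ e) ⬝ᵥ (nd.F i j)⁻¹ *ᵥ (nd.H i j *ᵥ z j)) - e ⬝ᵥ z j := by
    simp only [mulVec_dotProduct_eq_dotProduct_transpose_mulVec, transpose_transpose, sub_mulVec,
      smul_mulVec, one_mulVec, ← mulVec_mulVec, dotProduct_sub, dotProduct_smul, smul_eq_mul]
  simp only [← hXi, lmiCoupling, fromRows_mulVec, sumElim_dotProduct_sumElim,
    dotProduct_eq_sum_dotProduct, add_assoc]
  rfl

theorem dotProduct_lmiDamping_mulVec (u : Fin l → ℝ) (u' : Fin (nd.li i) → ℝ)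
    (o : nd.tIdx i k → Fin n → ℝ) (z : {j // j ∈ nd.V i k} → Fin n → ℝ) :
    Sum.elim u (Sum.elim u' (Sum.elim (fun wc => o wc.1 wc.2) fun jc => z jc.1 jc.2)) ⬝ᵥ
        nd.lmiDamping γ δ τ θ ϑ X i k *ᵥ
          Sum.elim u (Sum.elim u' (Sum.elim (fun wc => o wc.1 wc.2) fun jc => z jc.1 jc.2)) =
      γ ^ 2 * (Sum.elim u u' ⬝ᵥ Sum.elim u u') + ∑ t, nd.tCoef τ θ ϑ i k t * (o t ⬝ᵥ o t) +
        ∑ j : {j // j ∈ nd.V i k}, nd.decayRate δ j k * (z j ⬝ᵥ X j k *ᵥ z j) := by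
  have hT : (fun wc : nd.tIdx i k × Fin n => o wc.1 wc.2) ⬝ᵥ
      (diagonal fun wc => nd.tCoef τ θ ϑ i k wc.1) *ᵥ (fun wc => o wc.1 wc.2) =
        ∑ t, nd.tCoef τ θ ϑ i k t * (o t ⬝ᵥ o t) := by
    rw [dotProduct_eq_sum_dotProduct]
    refine sum_congr rfl fun t _ => ?_
    simp only [mulVec_diagonal, dotProduct, mul_sum]
    exact sum_congr rfl fun a _ => mul_left_comm _ _ _
  simp only [lmiDamping, fromBlocks_mulVec, Sum.elim_comp_inl, Sum.elim_comp_inr, zero_mulVec,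
    add_zero, zero_add, sumElim_dotProduct_sumElim, hT, dotProduct_blockDiagonal_swap_mulVec,
    smul_mulVec, one_mulVec, dotProduct_smul, smul_eq_mul]
  ring

/-- The terms of the quadratic form of LMI (16) that involve the noise and the measurement
uncertainty of node `i`, at error `e`, noise `rowKernelProj (measNoise i k) *ᵥ ζ` and
uncertainty `o`. -/
def nodeForm (e : Fin n → ℝ) (ζ : Fin l ⊕ Fin (nd.li i) → ℝ) (o : Fin n → ℝ) : ℝ :=
  2 * ((nd.inputNoise i)ᵀ *ᵥ (X i k *ᵥ e) ⬝ᵥ rowKernelProj (nd.measNoise i k) *ᵥ ζ) -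
    γ ^ 2 * (ζ ⬝ᵥ rowKernelProj (nd.measNoise i k) *ᵥ ζ) +
    2 * ((X i k *ᵥ e) ⬝ᵥ o) - τ i k * (o ⬝ᵥ o)

/-- The terms of the quadratic form of LMI (16) that involve the neighbour `j` of node `i`, at
error `e`, neighbour's error `z` and interconnection uncertainties `o₁`, `o₂`. -/
def edgeForm (e z o₁ o₂ : Fin n → ℝ) : ℝ :=
  2 * ((X i k *ᵥ e) ⬝ᵥ o₁) - θ i j k * (o₁ ⬝ᵥ o₁) +
    (2 * ((X i k *ᵥ e) ⬝ᵥ o₂) - ϑ i j k * (o₂ ⬝ᵥ o₂)) +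
    2 * (γ ^ 2 * ((nd.H i j *ᵥ e) ⬝ᵥ (nd.F i j)⁻¹ *ᵥ (nd.H i j *ᵥ z)) - e ⬝ᵥ z) -
    nd.decayRate δ j k * (z ⬝ᵥ X j k *ᵥ z)

theorem Qblk_add_nodeForm_add_edgeForm_nonpos (hE : IsUnit (nd.E i k))
    (hLMI : (-nd.bigMat γ δ β τ θ ϑ X i k).PosSemidef) (e : Fin n → ℝ)
    (ζ : Fin l ⊕ Fin (nd.li i) → ℝ) (o : Fin n → ℝ) (z o₁ o₂ : Fin N → Fin n → ℝ) :
    e ⬝ᵥ nd.Qblk γ δ β ϑ X i k *ᵥ e + nd.nodeForm γ τ X i k e ζ o +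
      ∑ j ∈ nd.V i k, nd.edgeForm γ δ θ ϑ X i j k e (z j) (o₁ j) (o₂ j) ≤ 0 := by
  set ν := rowKernelProj (nd.measNoise i k) *ᵥ ζ with hν
  let os : nd.tIdx i k → Fin n → ℝ :=
    Sum.elim (fun _ => o) (Sum.elim (fun j => o₁ j) fun j => o₂ j)
  let zs : {j // j ∈ nd.V i k} → Fin n → ℝ := fun j => z j
  have hform := hLMI.dotProduct_mulVec_nonneg (Sum.elim e (Sum.elim (ν ∘ Sum.inl)
    (Sum.elim (ν ∘ Sum.inr) (Sum.elim (fun wc => os wc.1 wc.2) fun jc => zs jc.1 jc.2))))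
  have hproj := rowKernelProj_mulVec_dotProduct_mulVec
    ((nd.E_eq_measNoise_mul_transpose i k) ▸ hE)
  rw [star_trivial, neg_mulVec, dotProduct_neg, bigMat_eq_fromBlocks,
    sumElim_dotProduct_fromBlocks_transpose_mulVec, neg_mulVec, dotProduct_neg,
    lmiCoupling_mulVec_dotProduct, dotProduct_lmiDamping_mulVec, Sum.elim_comp_inl_inr,
    sumElim_Nblk_mulVec_Sblk_mulVec, hν, hproj, hproj] at hform
  simp only [os, zs, Fintype.sum_sum_type, Sum.elim_inl, Sum.elim_inr, univ_unique,
    sum_singleton, tCoef] at hform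
  rw [← sum_coe_sort]
  simp only [nodeForm, edgeForm, sum_add_distrib, sum_sub_distrib, ← mul_sum] at hform ⊢
  linarith

end LMI

section NodeBalance

theorem dotProduct_Qblk_mulVec (hX : (X i k).IsSymm) (e : Fin n → ℝ) :
    e ⬝ᵥ nd.Qblk γ δ β ϑ X i k *ᵥ e =
      2 * ((X i k *ᵥ e) ⬝ᵥ nd.A *ᵥ e) + 2 * δ i * (e ⬝ᵥ X i k *ᵥ e) -
        2 * ((nd.D i k *ᵥ (nd.B2ᵀ *ᵥ (X i k *ᵥ e))) ⬝ᵥ (nd.E i k)⁻¹ *ᵥ (nd.C i k *ᵥ e)) +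
        ((nd.pdeg i k : ℝ) + nd.qdeg i k) * (e ⬝ᵥ e) +
        ∑ j with i ∈ nd.V j k, ϑ j i k * β j i ^ 2 * ((nd.H j i *ᵥ e) ⬝ᵥ nd.H j i *ᵥ e) +
        ∑ l', nd.Lam k l' * (e ⬝ᵥ X i l' *ᵥ e) -
        γ ^ 2 * ((nd.C i k *ᵥ e) ⬝ᵥ (nd.E i k)⁻¹ *ᵥ (nd.C i k *ᵥ e)) -
        γ ^ 2 * ∑ j ∈ nd.V i k, (nd.H i j *ᵥ e) ⬝ᵥ (nd.F i j)⁻¹ *ᵥ (nd.H i j *ᵥ e) := by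
  have hsymm (y : Fin n → ℝ) : e ⬝ᵥ X i k *ᵥ y = (X i k *ᵥ e) ⬝ᵥ y := by
    rw [dotProduct_mulVec_eq_transpose_mulVec_dotProduct, hX.eq]
  set P := nd.A + δ i • 1 - nd.B2 * (nd.D i k)ᵀ * (nd.E i k)⁻¹ * nd.C i k with hP
  have hPe : (X i k *ᵥ e) ⬝ᵥ P *ᵥ e = (X i k *ᵥ e) ⬝ᵥ nd.A *ᵥ e + δ i * (e ⬝ᵥ X i k *ᵥ e) -
      (nd.D i k *ᵥ (nd.B2ᵀ *ᵥ (X i k *ᵥ e))) ⬝ᵥ (nd.E i k)⁻¹ *ᵥ (nd.C i k *ᵥ e) := by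
    simp only [hP, sub_mulVec, add_mulVec, smul_mulVec, one_mulVec, dotProduct_sub,
      dotProduct_add, dotProduct_smul, smul_eq_mul, ← mulVec_mulVec, hsymm,
      dotProduct_mulVec_eq_transpose_mulVec_dotProduct nd.B2,
      ← mulVec_dotProduct_eq_dotProduct_transpose_mulVec]
  simp only [Qblk, ← hP, sub_mulVec, add_mulVec, smul_mulVec, one_mulVec, sum_mulVec,
    dotProduct_sub, dotProduct_add, dotProduct_smul, dotProduct_sum, smul_eq_mul,
    ← mulVec_mulVec, ← mulVec_dotProduct_eq_dotProduct_transpose_mulVec]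
  rw [hsymm (P *ᵥ e), dotProduct_comm (P *ᵥ e), hPe]
  ring

/-- The energy of the error `z` of node `j` that is booked on the edge from `j` to `i`: the balance
of node `i` receives it, the block `Q_j^k` pays for it. -/
def edgeStorage (z : Fin n → ℝ) : ℝ :=
  ϑ i j k * β i j ^ 2 * ((nd.H i j *ᵥ z) ⬝ᵥ nd.H i j *ᵥ z) +
    nd.decayRate δ j k * (z ⬝ᵥ X j k *ᵥ z) + z ⬝ᵥ z

theorem sum_edgeStorage (e : Fin n → ℝ) :
    ∑ j with i ∈ nd.V j k, nd.edgeStorage δ β ϑ X j i k e +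
        nd.decayRate δ i k * (e ⬝ᵥ X i k *ᵥ e) =
      ∑ j with i ∈ nd.V j k, ϑ j i k * β j i ^ 2 * ((nd.H j i *ᵥ e) ⬝ᵥ nd.H j i *ᵥ e) +
        2 * δ i * (e ⬝ᵥ X i k *ᵥ e) + nd.qdeg i k * (e ⬝ᵥ e) := by
  rw [← nd.qdeg_add_one_mul_decayRate δ i k]
  simp only [edgeStorage, sum_add_distrib, sum_const, nsmul_eq_mul, qdeg]
  ring

theorem dotProduct_Lgain_mulVec (hX : (X i k).PosDef) (e : Fin n → ℝ) (u : Fin (nd.r i) → ℝ) :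
    (X i k *ᵥ e) ⬝ᵥ nd.Lgain γ X i k *ᵥ u =
      γ ^ 2 * ((nd.C i k *ᵥ e) ⬝ᵥ (nd.E i k)⁻¹ *ᵥ u) +
        (nd.D i k *ᵥ (nd.B2ᵀ *ᵥ (X i k *ᵥ e))) ⬝ᵥ (nd.E i k)⁻¹ *ᵥ u := by
  simp only [Lgain, ← mulVec_mulVec, add_mulVec, smul_mulVec, dotProduct_add, dotProduct_smul,
    smul_eq_mul, mulVec_dotProduct_inv_mulVec (isHermitian_iff_isSymm.1 hX.isHermitian) hX.isUnit,
    dotProduct_mulVec_eq_transpose_mulVec_dotProduct nd.B2,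
    ← mulVec_dotProduct_eq_dotProduct_transpose_mulVec]

theorem dotProduct_Kgain_mulVec (hX : (X i k).PosDef) (e : Fin n → ℝ)
    (u : Fin (nd.rr i j) → ℝ) :
    (X i k *ᵥ e) ⬝ᵥ nd.Kgain γ X i j k *ᵥ u =
      γ ^ 2 * ((nd.H i j *ᵥ e) ⬝ᵥ (nd.F i j)⁻¹ *ᵥ u) := by
  simp only [Kgain, ← mulVec_mulVec, smul_mulVec, dotProduct_smul, smul_eq_mul,
    mulVec_dotProduct_inv_mulVec (isHermitian_iff_isSymm.1 hX.isHermitian) hX.isUnit,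
    ← mulVec_dotProduct_eq_dotProduct_transpose_mulVec]

theorem drift_eq (e : Fin N → Fin n → ℝ) (ξ : Fin l → ℝ) (ξl : (i : Fin N) → Fin (nd.li i) → ℝ)
    (w : (i j : Fin N) → Fin (nd.ss i j) → ℝ) (ω : Fin N → Fin n → ℝ)
    (ω1 ω2 : Fin N → Fin N → Fin n → ℝ) :
    nd.drift γ X k e ξ ξl w ω ω1 ω2 i =
      (nd.A *ᵥ e i + nd.inputNoise i *ᵥ Sum.elim ξ (ξl i) - nd.Lgain γ X i k *ᵥ
        (nd.C i k *ᵥ e i + nd.measNoise i k *ᵥ Sum.elim ξ (ξl i)) - ω i) +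
      ∑ j ∈ nd.V i k, (nd.Kgain γ X i j k *ᵥ (nd.H i j *ᵥ (e j - e i) - nd.G i j *ᵥ w i j) -
        (ω1 i j + ω2 i j)) := by
  simp only [drift, inputNoise_mulVec, measNoise_mulVec, sub_mulVec, mulVec_add,
    ← mulVec_mulVec, sum_sub_distrib]
  abel

theorem nodeDrift_le (hτ : 0 ≤ τ i k) (hX : (X i k).PosDef) (hE : (nd.E i k).PosDef) {a : ℝ}
    (hLMI : (γ ^ 2 • (1 : Matrix (Fin (nd.r i)) (Fin (nd.r i)) ℝ) -
      (τ i k * a) • nd.E i k).PosSemidef)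
    {e o : Fin n → ℝ} {ζ : Fin l ⊕ Fin (nd.li i) → ℝ}
    (ho : o ⬝ᵥ o ≤ a * ((nd.C i k *ᵥ e + nd.measNoise i k *ᵥ ζ) ⬝ᵥ
      (nd.C i k *ᵥ e + nd.measNoise i k *ᵥ ζ))) :
    2 * ((X i k *ᵥ e) ⬝ᵥ (nd.A *ᵥ e + nd.inputNoise i *ᵥ ζ -
        nd.Lgain γ X i k *ᵥ (nd.C i k *ᵥ e + nd.measNoise i k *ᵥ ζ) - o)) ≤
      2 * ((X i k *ᵥ e) ⬝ᵥ nd.A *ᵥ e) -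
        2 * ((nd.D i k *ᵥ (nd.B2ᵀ *ᵥ (X i k *ᵥ e))) ⬝ᵥ (nd.E i k)⁻¹ *ᵥ (nd.C i k *ᵥ e)) -
        γ ^ 2 * ((nd.C i k *ᵥ e) ⬝ᵥ (nd.E i k)⁻¹ *ᵥ (nd.C i k *ᵥ e)) +
        nd.nodeForm γ τ X i k e ζ (-o) + γ ^ 2 * (ζ ⬝ᵥ ζ) := by
  have hEM := nd.E_eq_measNoise_mul_transpose i k
  have hpay := output_uncertainty_le (hEM ▸ hE) hτ (hEM ▸ hLMI) ho
  rw [← hEM] at hpay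
  simp only [nodeForm, dotProduct_sub, dotProduct_add, nd.dotProduct_Lgain_mulVec γ X i k hX,
    dotProduct_mulVec_eq_transpose_mulVec_dotProduct (nd.inputNoise i),
    dotProduct_rowKernelProj_mulVec _ ((nd.inputNoise i)ᵀ *ᵥ (X i k *ᵥ e)),
    measNoise_mulVec_inputNoise_transpose_mulVec, ← hEM, mulVec_add, dotProduct_neg,
    neg_dotProduct, neg_neg] at hpay ⊢
  linarith

theorem edgeDrift_le (hθ : 0 ≤ θ i j k) (hϑ : 0 ≤ ϑ i j k) (hX : (X i k).PosDef)
    (hF : (nd.F i j).PosDef)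
    (hLMI : (γ ^ 2 • (1 : Matrix (Fin (nd.rr i j)) (Fin (nd.rr i j)) ℝ) -
      (θ i j k * β i j ^ 2) • nd.F i j).PosSemidef)
    {e z o₁ o₂ : Fin n → ℝ} {w : Fin (nd.ss i j) → ℝ}
    (ho₁ : o₁ ⬝ᵥ o₁ ≤ β i j ^ 2 *
      ((nd.H i j *ᵥ e + nd.G i j *ᵥ w) ⬝ᵥ (nd.H i j *ᵥ e + nd.G i j *ᵥ w)))
    (ho₂ : o₂ ⬝ᵥ o₂ ≤ β i j ^ 2 * ((nd.H i j *ᵥ z) ⬝ᵥ nd.H i j *ᵥ z)) :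
    (z - e) ⬝ᵥ (z - e) + 2 * ((X i k *ᵥ e) ⬝ᵥ
        (nd.Kgain γ X i j k *ᵥ (nd.H i j *ᵥ (z - e) - nd.G i j *ᵥ w) - (o₁ + o₂))) ≤
      nd.edgeForm γ δ θ ϑ X i j k e z (-o₁) (-o₂) + nd.edgeStorage δ β ϑ X i j k z + e ⬝ᵥ e -
        γ ^ 2 * ((nd.H i j *ᵥ e) ⬝ᵥ (nd.F i j)⁻¹ *ᵥ (nd.H i j *ᵥ e)) + γ ^ 2 * (w ⬝ᵥ w) := by
  have hpay := output_uncertainty_le hF hθ hLMI ho₁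
  have hneighbour := mul_le_mul_of_nonneg_left ho₂ hϑ
  have hproj : 0 ≤ γ ^ 2 * (w ⬝ᵥ rowKernelProj (nd.G i j) *ᵥ w) := by
    rw [← rowKernelProj_mulVec_dotProduct_mulVec hF.isUnit]
    exact mul_nonneg (sq_nonneg γ) (dotProduct_star_self_nonneg _)
  rw [← F] at hpay
  simp only [edgeForm, edgeStorage, dotProduct_sub, sub_dotProduct, dotProduct_add,
    nd.dotProduct_Kgain_mulVec γ X i j k hX, mulVec_add, mulVec_sub, dotProduct_neg, neg_dotProduct,
    neg_neg, dotProduct_comm z e] at hpay ⊢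
  linarith

end NodeBalance

section Dissipation

variable {γ δ β τ θ ϑ X i k}

theorem node_dissipation {a : ℝ} (hτ : 0 ≤ τ i k) (hθ : ∀ j ∈ nd.V i k, 0 ≤ θ i j k)
    (hϑ : ∀ j ∈ nd.V i k, 0 ≤ ϑ i j k) (hX : (X i k).PosDef) (hE : (nd.E i k).PosDef)
    (hF : ∀ j ∈ nd.V i k, (nd.F i j).PosDef)
    (hLMI15a : (γ ^ 2 • (1 : Matrix (Fin (nd.r i)) (Fin (nd.r i)) ℝ) -
      (τ i k * a) • nd.E i k).PosSemidef)
    (hLMI15b : ∀ j ∈ nd.V i k, (γ ^ 2 • (1 : Matrix (Fin (nd.rr i j)) (Fin (nd.rr i j)) ℝ) -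
      (θ i j k * β i j ^ 2) • nd.F i j).PosSemidef)
    (hLMI16 : (-nd.bigMat γ δ β τ θ ϑ X i k).PosSemidef)
    {e : Fin N → Fin n → ℝ} {ξ : Fin l → ℝ} {ξl : (i : Fin N) → Fin (nd.li i) → ℝ}
    {w : (i j : Fin N) → Fin (nd.ss i j) → ℝ} {ω : Fin N → Fin n → ℝ}
    {ω1 ω2 : Fin N → Fin N → Fin n → ℝ}
    (hω : ω i ⬝ᵥ ω i ≤ a * ((nd.C i k *ᵥ e i + nd.D i k *ᵥ ξ + nd.Dbar i k *ᵥ ξl i) ⬝ᵥ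
      (nd.C i k *ᵥ e i + nd.D i k *ᵥ ξ + nd.Dbar i k *ᵥ ξl i)))
    (hω1 : ∀ j ∈ nd.V i k, ω1 i j ⬝ᵥ ω1 i j ≤ β i j ^ 2 *
      ((nd.H i j *ᵥ e i + nd.G i j *ᵥ w i j) ⬝ᵥ (nd.H i j *ᵥ e i + nd.G i j *ᵥ w i j)))
    (hω2 : ∀ j ∈ nd.V i k, ω2 i j ⬝ᵥ ω2 i j ≤
      β i j ^ 2 * ((nd.H i j *ᵥ e j) ⬝ᵥ nd.H i j *ᵥ e j)) :
    ∑ j ∈ nd.V i k, (e j - e i) ⬝ᵥ (e j - e i) +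
        (∑ l', nd.Lam k l' * (e i ⬝ᵥ X i l' *ᵥ e i) +
          2 * (e i ⬝ᵥ X i k *ᵥ nd.drift γ X k e ξ ξl w ω ω1 ω2 i)) +
        nd.decayRate δ i k * (e i ⬝ᵥ X i k *ᵥ e i) +
        ∑ j with i ∈ nd.V j k, nd.edgeStorage δ β ϑ X j i k (e i) ≤
      γ ^ 2 * (ξ ⬝ᵥ ξ + ξl i ⬝ᵥ ξl i + ∑ j ∈ nd.V i k, w i j ⬝ᵥ w i j) +
        ∑ j ∈ nd.V i k, nd.edgeStorage δ β ϑ X i j k (e j) := by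
  have hsymm := isHermitian_iff_isSymm.1 hX.isHermitian
  rw [add_assoc (nd.C i k *ᵥ e i), ← measNoise_mulVec] at hω
  have hnode := nd.nodeDrift_le γ τ X i k hτ hX hE hLMI15a hω
  have hedge := sum_le_sum fun j hj => nd.edgeDrift_le γ δ β θ ϑ X i j k (hθ j hj) (hϑ j hj) hX
    (hF j hj) (hLMI15b j hj) (hω1 j hj) (hω2 j hj)
  have hform := nd.Qblk_add_nodeForm_add_edgeForm_nonpos γ δ β τ θ ϑ X i k hE.isUnit hLMI16 (e i)
    (Sum.elim ξ (ξl i)) (-ω i) e (fun j => -ω1 i j) (fun j => -ω2 i j)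
  rw [nd.dotProduct_Qblk_mulVec γ δ β ϑ X i k hsymm] at hform
  have hstorage := nd.sum_edgeStorage δ β ϑ X i k (e i)
  rw [drift_eq, dotProduct_mulVec_eq_transpose_mulVec_dotProduct, hsymm.eq, dotProduct_add,
    dotProduct_sum]
  simp only [sumElim_dotProduct_sumElim, sum_add_distrib, sum_sub_distrib, ← mul_sum, sum_const,
    nsmul_eq_mul, pdeg, mul_add, add_mul] at hnode hedge hform hstorage ⊢
  linarith

theorem sum_sum_neighbours_comm (f : Fin N → Fin N → ℝ) :
    ∑ i, ∑ j ∈ nd.V i k, f i j = ∑ i, ∑ j with i ∈ nd.V j k, f j i :=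
  sum_comm' fun i j => by simp

theorem natCast_mul_disagree [NeZero N] (e : Fin N → Fin n → ℝ) :
    (N : ℝ) * nd.disagree k e = ∑ i, ∑ j ∈ nd.V i k, (e j - e i) ⬝ᵥ (e j - e i) := by
  rw [disagree, one_div, mul_inv_cancel_left₀ (NeZero.ne _)]

end Dissipation

end NetData

theorem stmt8_general {n N M l : ℕ} [NeZero N] (nd : NetData n N M l) (k : Fin M)
    {γ ε : ℝ} {δ α : Fin N → ℝ} {β : Fin N → Fin N → ℝ} {τ : Fin N → Fin M → ℝ}
    {θ ϑ : Fin N → Fin N → Fin M → ℝ} {X : Fin N → Fin M → Matrix (Fin n) (Fin n) ℝ}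
    (hε : ∀ i, ε ≤ 2 * δ i / ((nd.qdeg i k : ℝ) + 1)) (hτ : ∀ i, 0 ≤ τ i k)
    (hθ : ∀ i, ∀ j ∈ nd.V i k, 0 ≤ θ i j k) (hϑ : ∀ i, ∀ j ∈ nd.V i k, 0 ≤ ϑ i j k)
    (hX : ∀ i, (X i k).PosDef) (hE : ∀ i, (nd.E i k).PosDef)
    (hF : ∀ i, ∀ j ∈ nd.V i k, (nd.F i j).PosDef)
    (hLMI15a : ∀ i, (γ ^ 2 • (1 : Matrix (Fin (nd.r i)) (Fin (nd.r i)) ℝ) -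
      (τ i k * α i ^ 2) • nd.E i k).PosSemidef)
    (hLMI15b : ∀ i, ∀ j ∈ nd.V i k,
      (γ ^ 2 • (1 : Matrix (Fin (nd.rr i j)) (Fin (nd.rr i j)) ℝ) -
        (θ i j k * β i j ^ 2) • nd.F i j).PosSemidef)
    (hLMI16 : ∀ i, (-nd.bigMat γ δ β τ θ ϑ X i k).PosSemidef)
    {e : Fin N → Fin n → ℝ} {ξ : Fin l → ℝ} {ξl : (i : Fin N) → Fin (nd.li i) → ℝ}
    {w : (i j : Fin N) → Fin (nd.ss i j) → ℝ} {ω : Fin N → Fin n → ℝ}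
    {ω1 ω2 : Fin N → Fin N → Fin n → ℝ}
    (hω : ∀ i, ω i ⬝ᵥ ω i ≤ α i ^ 2 *
      ((nd.C i k *ᵥ e i + nd.D i k *ᵥ ξ + nd.Dbar i k *ᵥ ξl i) ⬝ᵥ
        (nd.C i k *ᵥ e i + nd.D i k *ᵥ ξ + nd.Dbar i k *ᵥ ξl i)))
    (hω1 : ∀ i, ∀ j ∈ nd.V i k, ω1 i j ⬝ᵥ ω1 i j ≤ β i j ^ 2 *
      ((nd.H i j *ᵥ e i + nd.G i j *ᵥ w i j) ⬝ᵥ (nd.H i j *ᵥ e i + nd.G i j *ᵥ w i j)))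
    (hω2 : ∀ i, ∀ j ∈ nd.V i k, ω2 i j ⬝ᵥ ω2 i j ≤
      β i j ^ 2 * ((nd.H i j *ᵥ e j) ⬝ᵥ nd.H i j *ᵥ e j)) :
    (N : ℝ) * nd.disagree k e +
        ∑ i, (∑ l', nd.Lam k l' * (e i ⬝ᵥ X i l' *ᵥ e i) +
          2 * (e i ⬝ᵥ X i k *ᵥ nd.drift γ X k e ξ ξl w ω ω1 ω2 i)) ≤
      -ε * ∑ i, e i ⬝ᵥ X i k *ᵥ e i +
        γ ^ 2 * ∑ i, (ξ ⬝ᵥ ξ + ξl i ⬝ᵥ ξl i + ∑ j ∈ nd.V i k, w i j ⬝ᵥ w i j) := by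
  have hnodes := sum_le_sum fun i (_ : i ∈ univ) => nd.node_dissipation (hτ i) (hθ i) (hϑ i)
    (hX i) (hE i) (hF i) (hLMI15a i) (hLMI15b i) (hLMI16 i) (hω i) (hω1 i) (hω2 i)
  have hcancel := nd.sum_sum_neighbours_comm (k := k)
    fun i j => nd.edgeStorage δ β ϑ X i j k (e j)
  have hdecay : ε * ∑ i, e i ⬝ᵥ X i k *ᵥ e i ≤
      ∑ i, nd.decayRate δ i k * (e i ⬝ᵥ X i k *ᵥ e i) := by
    rw [mul_sum]
    exact sum_le_sum fun i _ => mul_le_mul_of_nonneg_right (hε i)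
      ((hX i).posSemidef.dotProduct_mulVec_nonneg (e i))
  rw [nd.natCast_mul_disagree]
  simp only [sum_add_distrib (s := univ), ← mul_sum] at hnodes ⊢
  linarith

/-- under the LMIs (15) and (16), the dissipation inequality
for the perturbed auxiliary observer network holds. -/
theorem stmt8 {n N M l : ℕ} [NeZero N] [NeZero M]
    (nd : NetData n N M l)
    (hself : ∀ i k, i ∉ nd.V i k)
    (γ : ℝ) (hγ : 0 < γ)
    (δ : Fin N → ℝ) (hδ : ∀ i, 0 < δ i)
    (α : Fin N → ℝ) (hα : ∀ i, 0 ≤ α i)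
    (β : Fin N → Fin N → ℝ) (hβ : ∀ i j, 0 ≤ β i j)
    (τ : Fin N → Fin M → ℝ) (hτ : ∀ i k, 0 < τ i k)
    (θ ϑ : Fin N → Fin N → Fin M → ℝ)
    (hθ : ∀ i k, ∀ j ∈ nd.V i k, 0 < θ i j k)
    (hϑ : ∀ i k, ∀ j ∈ nd.V i k, 0 < ϑ i j k)
    (X : Fin N → Fin M → Matrix (Fin n) (Fin n) ℝ)
    (hX : ∀ i k, (X i k).PosDef)
    (hE : ∀ i k, (nd.E i k).PosDef)
    (hF : ∀ i k, ∀ j ∈ nd.V i k, (nd.F i j).PosDef)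
    (hLamOff : ∀ k l', k ≠ l' → 0 ≤ nd.Lam k l')
    (hLamRow : ∀ k, ∑ l', nd.Lam k l' = 0)
    -- LMI (15)
    (hLMI15a : ∀ i k,
      (γ ^ 2 • (1 : Matrix (Fin (nd.r i)) (Fin (nd.r i)) ℝ)
        - (τ i k * (α i) ^ 2) • nd.E i k).PosDef)
    (hLMI15b : ∀ i k, ∀ j ∈ nd.V i k,
      (γ ^ 2 • (1 : Matrix (Fin (nd.rr i j)) (Fin (nd.rr i j)) ℝ)
        - (θ i j k * (β i j) ^ 2) • nd.F i j).PosDef)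
    -- LMI (16): the big block matrix is negative definite
    (hLMI16 : ∀ i k, (-(nd.bigMat γ δ β τ θ ϑ X i k)).PosDef) :
    ∀ (k : Fin M) (e : Fin N → Fin n → ℝ) (ξ : Fin l → ℝ)
      (ξl : (i : Fin N) → Fin (nd.li i) → ℝ)
      (w : (i j : Fin N) → Fin (nd.ss i j) → ℝ)
      (ω : Fin N → Fin n → ℝ) (ω1 ω2 : Fin N → Fin N → Fin n → ℝ),
      (∀ i, ω i ⬝ᵥ ω i ≤ (α i) ^ 2 *
        ((nd.C i k *ᵥ e i + nd.D i k *ᵥ ξ + nd.Dbar i k *ᵥ ξl i) ⬝ᵥ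
         (nd.C i k *ᵥ e i + nd.D i k *ᵥ ξ + nd.Dbar i k *ᵥ ξl i))) →
      (∀ i, ∀ j ∈ nd.V i k, ω1 i j ⬝ᵥ ω1 i j ≤ (β i j) ^ 2 *
        ((nd.H i j *ᵥ e i + nd.G i j *ᵥ w i j) ⬝ᵥ
         (nd.H i j *ᵥ e i + nd.G i j *ᵥ w i j))) →
      (∀ i, ∀ j ∈ nd.V i k, ω2 i j ⬝ᵥ ω2 i j ≤ (β i j) ^ 2 *
        ((nd.H i j *ᵥ e j) ⬝ᵥ (nd.H i j *ᵥ e j))) →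
      (N : ℝ) * nd.disagree k e
        + ∑ i, ((∑ l', nd.Lam k l' * (e i ⬝ᵥ (X i l' *ᵥ e i)))
            + 2 * (e i ⬝ᵥ (X i k *ᵥ nd.drift γ X k e ξ ξl w ω ω1 ω2 i)))
      ≤ -(Finset.univ.inf' Finset.univ_nonempty
            (fun ik : Fin N × Fin M =>
              2 * δ ik.1 / ((nd.qdeg ik.1 ik.2 : ℝ) + 1)))
          * ∑ i, e i ⬝ᵥ (X i k *ᵥ e i)
        + γ ^ 2 * ∑ i, (ξ ⬝ᵥ ξ + ξl i ⬝ᵥ ξl i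
            + ∑ j ∈ nd.V i k, w i j ⬝ᵥ w i j) := by
  intro k e ξ ξl w ω ω1 ω2 hω hω1 hω2
  exact stmt8_general nd k (fun i => inf'_le _ (mem_univ (i, k))) (fun i => (hτ i k).le)
    (fun i j hj => (hθ i k j hj).le) (fun i j hj => (hϑ i k j hj).le) (hX · k) (hE · k) (hF · k)
    (hLMI15a · k |>.posSemidef) (fun i j hj => (hLMI15b i k j hj).posSemidef)
    (hLMI16 · k |>.posSemidef) hω hω1 hω2
end
end
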